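/- Let A be a module over a commutative ring R equipped with an R-bilinear multiplication ∘ : A × A → A and an R-bilinear, alternating bracket [·,·] : A × A → A satisfying the Jacobi identity. Then for all X, Y, Z, W ∈ A the following identity (15) holds: P_{[X,Y]}(Z,W) = [X, P_Y(Z,W)] − P_Y([X,Z], W) − P_Y(Z, [X,W]) − [Y, P_X(Z,W)] + P_X([Y,Z], W) + P_X(Z, [Y,W]). -/

import Mathlib

/-- The deviation `P_X(Z,W) = [X, Z∘W] − [X,Z]∘W − Z∘[X,W]` of the structure
`(A, ∘, [·,·])` from being a Poisson algebra. -/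
def Pdev {R A : Type*} [CommRing R] [AddCommGroup A] [Module R A]
    (mul brk : A →ₗ[R] A →ₗ[R] A) (X Z W : A) : A :=
  brk X (mul Z W) - mul (brk X Z) W - mul Z (brk X W)

/-! `P_X` is the Lie derivative of the multiplication along `ad X`: the Lie algebra `End A` acts on
bilinear maps `A × A → A`, and `P_X = ⁅ad X, ∘⁆`. For a skew-symmetric bracket the Jacobi identity
is the Leibniz identity `ad [X, Y] = ⁅ad X, ad Y⁆`, so `P_{[X,Y]} = ⁅ad X, P_Y⁆ - ⁅ad Y, P_X⁆`,
which is identity (15) once the two actions on the right are written out. -/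

theorem lie_linearMap_apply₂ {R L M N P : Type*} [CommRing R] [LieRing L] [LieAlgebra R L]
    [AddCommGroup M] [Module R M] [LieRingModule L M] [LieModule R L M]
    [AddCommGroup N] [Module R N] [LieRingModule L N] [LieModule R L N]
    [AddCommGroup P] [Module R P] [LieRingModule L P] [LieModule R L P]
    (x : L) (f : M →ₗ[R] N →ₗ[R] P) (m : M) (n : N) :
    ⁅x, f⁆ m n = ⁅x, f m n⁆ - f ⁅x, m⁆ n - f m ⁅x, n⁆ := by
  rw [LieHom.lie_apply, LinearMap.sub_apply, LieHom.lie_apply, sub_right_comm]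

section

attribute [local instance] LieRing.ofAssociativeRing

variable {R A : Type*} [CommRing R] [AddCommGroup A] [Module R A]

theorem bracket_bracket_eq_lie_of_jacobi {brk : A →ₗ[R] A →ₗ[R] A}
    (hskew : ∀ x y : A, -brk x y = brk y x)
    (hjac : ∀ x y z : A, brk x (brk y z) + brk y (brk z x) + brk z (brk x y) = 0) (x y : A) :
    brk (brk x y) = (⁅brk x, brk y⁆ : Module.End R A) := by
  ext z
  calc brk (brk x y) z = -brk z (brk x y) := (hskew _ _).symm
    _ = brk x (brk y z) + brk y (brk z x) := (eq_neg_of_add_eq_zero_left (hjac x y z)).symm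
    _ = brk x (brk y z) - brk y (brk x z) := by rw [← hskew x z, map_neg, sub_eq_add_neg]

theorem Pdev_eq_lie (mul brk : A →ₗ[R] A →ₗ[R] A) (X Z W : A) :
    Pdev mul brk X Z W = ⁅(brk X : Module.End R A), mul⁆ Z W :=
  (lie_linearMap_apply₂ (L := Module.End R A) (brk X) mul Z W).symm

theorem Pdev_bracket_identity_general (mul brk : A →ₗ[R] A →ₗ[R] A) {X Y : A}
    (hleib : brk (brk X Y) = (⁅brk X, brk Y⁆ : Module.End R A)) (Z W : A) :
    Pdev mul brk (brk X Y) Z W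
      = brk X (Pdev mul brk Y Z W)
        - Pdev mul brk Y (brk X Z) W - Pdev mul brk Y Z (brk X W)
        - brk Y (Pdev mul brk X Z W)
        + Pdev mul brk X (brk Y Z) W + Pdev mul brk X Z (brk Y W) := by
  let adX : Module.End R A := brk X
  let adY : Module.End R A := brk Y
  calc Pdev mul brk (brk X Y) Z W
      = ⁅⁅adX, adY⁆, mul⁆ Z W := by rw [Pdev_eq_lie, hleib]
    _ = ⁅adX, ⁅adY, mul⁆⁆ Z W - ⁅adY, ⁅adX, mul⁆⁆ Z W := by
      rw [lie_lie, LinearMap.sub_apply, LinearMap.sub_apply]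
    _ = (brk X (Pdev mul brk Y Z W)
          - Pdev mul brk Y (brk X Z) W - Pdev mul brk Y Z (brk X W))
        - (brk Y (Pdev mul brk X Z W)
          - Pdev mul brk X (brk Y Z) W - Pdev mul brk X Z (brk Y W)) := by
      simp only [Pdev_eq_lie, lie_linearMap_apply₂ _ ⁅_, mul⁆, Module.End.lie_apply, adX, adY]
    _ = _ := by abel

end

/-- Identity (15) of the paper. -/
theorem Pdev_bracket_identity {R A : Type*} [CommRing R] [AddCommGroup A] [Module R A]
    (mul brk : A →ₗ[R] A →ₗ[R] A)
    (halt : ∀ x : A, brk x x = 0)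
    (hjac : ∀ x y z : A, brk x (brk y z) + brk y (brk z x) + brk z (brk x y) = 0) :
    ∀ X Y Z W : A,
      Pdev mul brk (brk X Y) Z W
        = brk X (Pdev mul brk Y Z W)
          - Pdev mul brk Y (brk X Z) W - Pdev mul brk Y Z (brk X W)
          - brk Y (Pdev mul brk X Z W)
          + Pdev mul brk X (brk Y Z) W + Pdev mul brk X Z (brk Y W) := by
  intro X Y
  exact Pdev_bracket_identity_general mul brk
    (bracket_bracket_eq_lie_of_jacobi (LinearMap.IsAlt.neg halt) hjac X Y)
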